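/- Every finite game has a Nash equilibrium in mixed strategies: if I is a nonempty finite set of players, each player i has a nonempty finite strategy set S i, and each player i has a payoff function u i : (Π j, S j) → ℝ, then there exists a mixed strategy profile σ (for each player i, a function σ i : S i → ℝ with nonnegative values summing to 1) such that for every player i and every mixed strategy τ : S i → ℝ with nonnegative values summing to 1, the expected payoff to i under σ is at least the expected payoff to i under the profile obtained from σ by replacing σ i with τ. -/

import Mathlib

/-!
A mixed profile is an equilibrium iff no pure deviation gains, and such a profile is a fixed point
of Nash's map, which shifts each player's weight towards the profitable pure strategies. A
product of simplices is a retract of the simplex of joint distributions (multiply independent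
factors, take marginals), so Brouwer's theorem on one simplex provides the fixed point.

Brouwer's theorem follows from a combinatorial lemma of Scarf. Order a finite set of points of the
simplex by each coordinate, adjoin one extreme point (a corner) per coordinate, and label every
point by a coordinate that the map does not decrease. Counting incidences between full-dimensional
dominant sets (rooms) and their almost completely labelled facets (doors) modulo 2 yields a
completely labelled room. If the points form a fine net, the points of this room are close to each
other, and their coordinates labelled only by a corner are close to zero; a limit of such rooms is a
fixed point.
-/

open Finset Function

theorem card_filter_image_erase_eq_image {ι κ : Type*} [DecidableEq ι] [DecidableEq κ]
    {s : Finset ι} {f : ι → κ} (h : #(s.image f) + 1 = #s) :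
    #{x ∈ s | (s.erase x).image f = s.image f} = 2 := by
  obtain ⟨i, hi, j, hj, hij, hfij⟩ : ∃ i ∈ s, ∃ j ∈ s, i ≠ j ∧ f i = f j :=
    exists_ne_map_eq_of_card_lt_of_maps_to (by lia) fun _ hx ↦ mem_image_of_mem f hx
  have mem_iff : ∀ x ∈ s, (s.erase x).image f = s.image f ↔ ∃ y ∈ s, y ≠ x ∧ f y = f x := by
    intro x hx
    conv_lhs => rw [← insert_erase hx, image_insert, erase_insert (notMem_erase x s), eq_comm,
      insert_eq_self, mem_image]
    simp only [mem_erase, and_assoc, and_left_comm]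
  have injOn_erase : ∀ x ∈ s, (s.erase x).image f = s.image f → Set.InjOn f (s.erase x) :=
    fun x hx himage ↦ card_image_iff.1 <| by rw [himage, card_erase_of_mem hx]; lia
  have injOn_i := injOn_erase i hi ((mem_iff i hi).2 ⟨j, hj, hij.symm, hfij.symm⟩)
  have injOn_j := injOn_erase j hj ((mem_iff j hj).2 ⟨i, hi, hij, hfij⟩)
  suffices {x ∈ s | (s.erase x).image f = s.image f} = {i, j} by rw [this, card_pair hij]
  ext x
  simp only [mem_filter, mem_insert, mem_singleton]
  constructor
  · rintro ⟨hx, himage⟩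
    obtain ⟨y, hy, hyx, hfyx⟩ := (mem_iff x hx).1 himage
    by_contra! hne
    by_cases hyi : y = i
    · subst hyi
      exact hyx (injOn_j (by simp [*]) (by simp [*]) hfyx)
    · exact hyx (injOn_i (by simp [*]) (by simp [*]) hfyx)
  · rintro (rfl | rfl)
    · exact ⟨hi, (mem_iff x hi).2 ⟨j, hj, hij.symm, hfij.symm⟩⟩
    · exact ⟨hj, (mem_iff x hj).2 ⟨i, hi, hij, hfij⟩⟩

theorem even_card_filter_image_erase_eq {ι κ : Type*} [DecidableEq ι] [DecidableEq κ] [Fintype κ]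
    {s : Finset ι} {c : ι → κ} (hcard : #s = Fintype.card κ) (hne : s.image c ≠ univ) (k : κ) :
    Even #{x ∈ s | (s.erase x).image c = univ.erase k} := by
  obtain hempty | ⟨x, hx⟩ := {x ∈ s | (s.erase x).image c = univ.erase k}.eq_empty_or_nonempty
  · simp [hempty]
  have himage : s.image c = univ.erase k := by
    obtain ⟨-, hx⟩ := mem_filter.1 hx
    have hsub : univ.erase k ⊆ s.image c := hx ▸ image_subset_image (erase_subset x s)
    refine (eq_of_subset_of_card_le hsub ?_).symm
    have hlt : #(s.image c) < Fintype.card κ := card_lt_card (ssubset_univ_iff.2 hne)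
    rw [card_erase_of_mem (mem_univ k), card_univ]
    lia
  have hpos : 0 < Fintype.card κ := Fintype.card_pos_iff.2 ⟨k⟩
  rw [← himage, card_filter_image_erase_eq_image]
  · exact even_two
  · rw [himage, card_erase_of_mem (mem_univ k), card_univ]
    lia

theorem sum_card_insert_eq_sum_card_erase {X : Type*} [Fintype X] [DecidableEq X]
    (P Q : Finset X → Prop) [DecidablePred P] [DecidablePred Q] :
    ∑ τ with P τ, #{w | w ∉ τ ∧ Q (insert w τ)} = ∑ σ with Q σ, #{x ∈ σ | P (σ.erase x)} := by
  simp only [← card_sigma]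
  refine card_nbij' (fun p ↦ ⟨insert p.2 p.1, p.2⟩) (fun p ↦ ⟨p.1.erase p.2, p.2⟩) ?_ ?_ ?_ ?_ <;>
    simp +contextual [Set.MapsTo, Set.LeftInvOn]

section Scarf

variable {I X α : Type*} [LinearOrder α] {r : I → X → α} {σ τ : Finset X} {i k l : I} {w x y : X}

theorem eq_of_isMinOn_of_isMinOn {f : X → α} (hf : Injective f) (hx : x ∈ σ) (hy : y ∈ σ)
    (hxmin : IsMinOn f σ x) (hymin : IsMinOn f σ y) : x = y :=
  hf (le_antisymm (hxmin hy) (hymin hx))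

/-- Scarf's dominant sets: no point exceeds the `r i`-minimum of `σ` for all `i` at once. The index
`i` orders `X` through `r i`. As `IsMinOn` does not ask that `y ∈ σ`, the condition says that every
`y` lies weakly below all of `σ` for some `i`. -/
def IsDominant (r : I → X → α) (σ : Finset X) : Prop :=
  ∀ y, ∃ i, IsMinOn (r i) σ y

/-- The points that no index other than `k` places below all of `τ`. When `τ` is a dominant set of
codimension one, its dominant extensions by one point correspond to the indices `k` whose region is
nonempty and disjoint from `τ`: add the `r k`-greatest point of the region. -/
def exclusiveRegion (r : I → X → α) (τ : Finset X) (k : I) : Set X :=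
  {y | ∀ l ≠ k, ¬ IsMinOn (r l) τ y}

namespace IsDominant

theorem mono (hσ : IsDominant r σ) (h : τ ⊆ σ) : IsDominant r τ := fun y ↦
  (hσ y).imp fun _ hi ↦ hi.on_subset (coe_subset.2 h)

theorem isMinOn_of_mem_exclusiveRegion (hτ : IsDominant r τ) (hy : y ∈ exclusiveRegion r τ k) :
    IsMinOn (r k) τ y := by
  obtain ⟨l, hl⟩ := hτ y
  obtain rfl : l = k := by_contra fun hlk ↦ hy l hlk hl
  exact hl

theorem eq_of_mem_exclusiveRegion (hτ : IsDominant r τ) (hk : y ∈ exclusiveRegion r τ k)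
    (hl : y ∈ exclusiveRegion r τ l) : k = l :=
  by_contra fun hkl ↦ hl k hkl (hτ.isMinOn_of_mem_exclusiveRegion hk)

theorem eq_of_isMinOn [Fintype I] (hr : ∀ i, Injective (r i)) (hσ : IsDominant r σ)
    (hcard : #σ = Fintype.card I) (hx : x ∈ σ) (hk : IsMinOn (r k) σ x)
    (hl : IsMinOn (r l) σ x) : k = l := by
  classical
  choose index hindex using hσ
  have index_injOn : Set.InjOn index σ := fun x hx y hy hxy ↦
    eq_of_isMinOn_of_isMinOn (hr _) hx hy (hindex x) (hxy ▸ hindex y)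
  have index_surj : σ.image index = univ :=
    eq_univ_of_card _ ((card_image_of_injOn index_injOn).trans hcard)
  have index_eq : ∀ m, IsMinOn (r m) σ x → index x = m := by
    intro m hm
    obtain ⟨x', hx', rfl⟩ := mem_image.1 (index_surj ▸ mem_univ m)
    rw [eq_of_isMinOn_of_isMinOn (hr _) hx hx' hm (hindex x')]
  exact (index_eq k hk).symm.trans (index_eq l hl)

open Classical in
theorem card_disjoint_exclusiveRegion [Fintype I] (hr : ∀ i, Injective (r i)) (hτ : IsDominant r τ)
    (hne : τ.Nonempty) (hcard : #τ + 1 = Fintype.card I) :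
    #{k | Disjoint ↑τ (exclusiveRegion r τ k)} = 2 := by
  -- `argmin` maps `I` onto `τ`, which has one element less, so exactly two indices are dispensable.
  have exists_min : ∀ k, ∃ x ∈ τ, IsMinOn (r k) τ x := fun k ↦ exists_min_image τ (r k) hne
  choose argmin argmin_mem argmin_min using exists_min
  have isMinOn_iff_argmin : ∀ {x}, x ∈ τ → ∀ k, IsMinOn (r k) τ x ↔ argmin k = x :=
    fun hx k ↦ ⟨eq_of_isMinOn_of_isMinOn (hr k) (argmin_mem k) hx (argmin_min k),
      fun h ↦ h ▸ argmin_min k⟩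
  have image_argmin : univ.image argmin = τ := by
    ext x
    simp only [mem_image, mem_univ, true_and]
    refine ⟨fun ⟨k, hk⟩ ↦ hk ▸ argmin_mem k, fun hx ↦ ?_⟩
    exact (hτ x).imp fun k hk ↦ (isMinOn_iff_argmin hx k).1 hk
  have disjoint_iff : ∀ k, Disjoint ↑τ (exclusiveRegion r τ k) ↔
      (univ.erase k).image argmin = univ.image argmin := by
    intro k
    rw [(image_subset_image (erase_subset k univ)).ge_iff_eq.symm, image_argmin, Set.disjoint_left]
    refine forall₂_congr fun x hx ↦ ?_
    simp [exclusiveRegion, isMinOn_iff_argmin hx]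
  simp only [disjoint_iff]
  exact card_filter_image_erase_eq_image (by rw [image_argmin, hcard, card_univ])

variable [DecidableEq X]

theorem insert_of_isMaxOn (hτ : IsDominant r τ) (hw : w ∈ exclusiveRegion r τ k)
    (hmax : IsMaxOn (r k) (exclusiveRegion r τ k) w) : IsDominant r (insert w τ) := by
  have extend : ∀ {l y}, IsMinOn (r l) τ y → r l y ≤ r l w → IsMinOn (r l) ↑(insert w τ) y := by
    intro l y hy hyw
    rw [isMinOn_iff, coe_insert, Set.forall_mem_insert]
    exact ⟨hyw, isMinOn_iff.1 hy⟩
  intro y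
  by_cases hy : y ∈ exclusiveRegion r τ k
  · exact ⟨k, extend (hτ.isMinOn_of_mem_exclusiveRegion hy) (hmax hy)⟩
  · obtain ⟨l, hlk, hl⟩ : ∃ l ≠ k, IsMinOn (r l) τ y := by simpa [exclusiveRegion] using hy
    refine ⟨l, extend hl (le_of_not_ge fun hwy ↦ hw l hlk ?_)⟩
    exact fun x hx ↦ hwy.trans (hl hx)

theorem exists_isMaxOn_of_insert [Fintype I] (hr : ∀ i, Injective (r i)) (hw : w ∉ τ)
    (hdom : IsDominant r (insert w τ)) (hcard : #τ + 1 = Fintype.card I) :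
    ∃ k, Disjoint ↑τ (exclusiveRegion r τ k) ∧ w ∈ exclusiveRegion r τ k ∧
      IsMaxOn (r k) (exclusiveRegion r τ k) w := by
  have mem_w : w ∈ insert w τ := mem_insert_self w τ
  have subset_insert : (τ : Set X) ⊆ ↑(insert w τ) := coe_subset.2 (subset_insert w τ)
  obtain ⟨k, hk⟩ := hdom w
  refine ⟨k, Set.disjoint_left.2 fun x hx hxk ↦ ?_, fun l hlk hl ↦ ?_, fun y hy ↦ ?_⟩
  · obtain ⟨l, hl⟩ := hdom x
    obtain rfl : l = k := by_contra fun hlk ↦ hxk l hlk (hl.on_subset subset_insert)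
    exact hw (eq_of_isMinOn_of_isMinOn (hr l) mem_w (subset_insert hx) hk hl ▸ hx)
  · refine hlk (hdom.eq_of_isMinOn hr (by rw [card_insert_of_notMem hw, hcard]) mem_w ?_ hk)
    rw [isMinOn_iff, coe_insert, Set.forall_mem_insert]
    exact ⟨le_rfl, isMinOn_iff.1 hl⟩
  · obtain ⟨l, hl⟩ := hdom y
    obtain rfl : l = k := by_contra fun hlk ↦ hy l hlk (hl.on_subset subset_insert)
    exact hl mem_w

open Classical in
theorem card_insert_eq_card_exclusiveRegion [Fintype I] [Fintype X] (hr : ∀ i, Injective (r i))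
    (hτ : IsDominant r τ) (hcard : #τ + 1 = Fintype.card I) :
    #{w | w ∉ τ ∧ IsDominant r (insert w τ)} =
      #{k | Disjoint ↑τ (exclusiveRegion r τ k) ∧ (exclusiveRegion r τ k).Nonempty} := by
  have exists_max : ∀ k, (exclusiveRegion r τ k).Nonempty →
      ∃ w ∈ exclusiveRegion r τ k, IsMaxOn (r k) (exclusiveRegion r τ k) w :=
    fun k hk ↦ Set.exists_max_image _ _ (Set.toFinite _) hk
  choose top top_mem top_max using exists_max
  refine (card_bij (fun k hk ↦ top k (mem_filter.1 hk).2.2) ?_ ?_ ?_).symm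
  · intro k hk
    obtain ⟨-, hdisj, hne⟩ := mem_filter.1 hk
    exact mem_filter.2 ⟨mem_univ _, fun hmem ↦ hdisj.notMem_of_mem_left hmem (top_mem k hne),
      hτ.insert_of_isMaxOn (top_mem k hne) (top_max k hne)⟩
  · intro k hk l hl heq
    exact hτ.eq_of_mem_exclusiveRegion (top_mem k _) (heq ▸ top_mem l _)
  · intro w hw
    obtain ⟨-, hwτ, hdom⟩ := mem_filter.1 hw
    obtain ⟨k, hdisj, hwk, hmax⟩ := exists_isMaxOn_of_insert hr hwτ hdom hcard
    have hk : (exclusiveRegion r τ k).Nonempty := ⟨w, hwk⟩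
    exact ⟨k, mem_filter.2 ⟨mem_univ k, hdisj, hk⟩,
      hr k (le_antisymm (hmax (top_mem k hk)) (top_max k hk hwk))⟩

end IsDominant

/-- Scarf's slack vectors, which play the role of the vertices of the ambient simplex: the corner
`a i` is a least point for `r i`, while every other index places it above all non-corners. -/
structure IsCornerSystem (r : I → X → α) (a : I → X) : Prop where
  corner_le : ∀ i x, r i (a i) ≤ r i x
  lt_corner : ∀ i j x, j ≠ i → x ∉ Set.range a → r i x < r i (a j)

namespace IsCornerSystem

variable {a : I → X}

theorem corner_mem_exclusiveRegion (ha : IsCornerSystem r a) (hx : x ∈ τ)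
    (hxa : x ∉ Set.range a) (k : I) : a k ∈ exclusiveRegion r τ k :=
  fun l hlk hmin ↦ (ha.lt_corner l k x hlk.symm hxa).not_ge (hmin hx)

variable [Fintype I] [DecidableEq I] [DecidableEq X]

theorem isDominant_facet (ha : IsCornerSystem r a) (i : I) :
    IsDominant r ((univ.erase i).image a) := by
  intro y
  by_cases hy : y ∈ Set.range a
  · obtain ⟨k, rfl⟩ := hy
    exact ⟨k, fun x _ ↦ ha.corner_le k x⟩
  · refine ⟨i, fun x hx ↦ ?_⟩
    obtain ⟨j, hj, rfl⟩ := mem_image.1 hx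
    exact (ha.lt_corner i j y (ne_of_mem_erase hj) hy).le

theorem eq_corner_of_isMinOn_facet (ha : IsCornerSystem r a) (hr : ∀ i, Injective (r i))
    (hki : k ≠ i) (hy : IsMinOn (r k) ↑((univ.erase i).image a) y) : y = a k :=
  hr k (le_antisymm (hy (mem_image_of_mem a (mem_erase.2 ⟨hki, mem_univ k⟩))) (ha.corner_le k y))

theorem disjoint_and_nonempty_facet_iff (ha : IsCornerSystem r a) (hr : ∀ i, Injective (r i))
    (ha_inj : Injective a) :
    Disjoint ↑((univ.erase i).image a) (exclusiveRegion r ((univ.erase i).image a) k) ∧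
      (exclusiveRegion r ((univ.erase i).image a) k).Nonempty ↔ k = i := by
  set τ := (univ.erase i).image a
  have corner_mem : ∀ j ≠ i, a j ∈ τ := fun j hj ↦
    mem_image_of_mem a (mem_erase.2 ⟨hj, mem_univ j⟩)
  constructor
  · rintro ⟨hdisj, y, hy⟩
    by_contra hki
    have y_not_min : ¬ IsMinOn (r i) τ y := hy i (Ne.symm hki)
    obtain ⟨l, hlk, hl⟩ : ∃ l ≠ k, IsMinOn (r l) τ (a k) := by
      simpa [exclusiveRegion] using hdisj.notMem_of_mem_left (corner_mem k hki)
    have hli : l = i := by_contra fun hli ↦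
      hlk (ha_inj (ha.eq_corner_of_isMinOn_facet hr hli hl)).symm
    subst hli
    obtain ⟨j, rfl⟩ : y ∈ Set.range a := by_contra fun hya ↦ y_not_min fun x hx ↦ by
      obtain ⟨j, hj, rfl⟩ := mem_image.1 hx
      exact (ha.lt_corner l j y (ne_of_mem_erase hj) hya).le
    by_cases hjk : j = k
    · exact y_not_min (hjk ▸ hl)
    · exact hy j hjk fun x _ ↦ ha.corner_le j x
  · rintro rfl
    refine ⟨Set.disjoint_left.2 fun x hx hxk ↦ ?_, a k, fun l hlk hl ↦ ?_⟩
    · obtain ⟨j, hj, rfl⟩ := mem_image.1 hx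
      exact hxk j (ne_of_mem_erase hj) fun x _ ↦ ha.corner_le j x
    · exact hlk (ha_inj (ha.eq_corner_of_isMinOn_facet hr hlk hl)).symm

end IsCornerSystem

section Labelling

variable [Fintype I] {a : I → X} {c : X → I}

/-- The dominant sets of full dimension, over which the parity argument runs. -/
def IsRoom (r : I → X → α) (σ : Finset X) : Prop :=
  IsDominant r σ ∧ #σ = Fintype.card I

/-- The dominant sets of codimension one in which exactly the label `i` is missing; a room is
entered through such a set by adding one point. -/
def IsDoor [DecidableEq I] (r : I → X → α) (c : X → I) (i : I) (τ : Finset X) : Prop :=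
  IsDominant r τ ∧ #τ + 1 = Fintype.card I ∧ τ.image c = univ.erase i

variable [DecidableEq I] [DecidableEq X]

theorem isDoor_facet (ha : IsCornerSystem r a) (hca : LeftInverse c a) (i : I) :
    IsDoor r c i ((univ.erase i).image a) := by
  refine ⟨ha.isDominant_facet i, ?_, ?_⟩
  · rw [card_image_of_injective _ hca.injective, card_erase_add_one (mem_univ i), card_univ]
  · rw [image_image, hca.comp_eq_id, image_id]

theorem IsDoor.exists_notMem_range (hca : LeftInverse c a) (hτ : IsDoor r c i τ)
    (hne : τ ≠ (univ.erase i).image a) : ∃ x ∈ τ, x ∉ Set.range a := by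
  obtain ⟨-, -, himage⟩ := hτ
  by_contra! hrange
  refine hne (eq_of_subset_of_card_le (fun x hx ↦ ?_) ?_)
  · obtain ⟨k, rfl⟩ := hrange x hx
    exact mem_image_of_mem a (hca k ▸ himage ▸ mem_image_of_mem c hx)
  · rw [card_image_of_injective _ hca.injective, ← himage]
    exact card_image_le

open Classical in
theorem IsDoor.odd_card_isRoom_iff [Fintype X] (hr : ∀ i, Injective (r i))
    (ha : IsCornerSystem r a) (hca : LeftInverse c a) (hτ : IsDoor r c i τ) :
    Odd #{w | w ∉ τ ∧ IsRoom r (insert w τ)} ↔ τ = (univ.erase i).image a := by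
  have ⟨hdom, hcard, _⟩ := hτ
  have isRoom_iff : ∀ w, w ∉ τ ∧ IsRoom r (insert w τ) ↔ w ∉ τ ∧ IsDominant r (insert w τ) :=
    fun w ↦ and_congr_right fun hw ↦ by rw [IsRoom, card_insert_of_notMem hw]; tauto
  simp only [isRoom_iff]
  rw [hdom.card_insert_eq_card_exclusiveRegion hr hcard]
  constructor
  · contrapose!
    intro hne
    obtain ⟨x, hx, hxa⟩ := hτ.exists_notMem_range hca hne
    have region_nonempty : ∀ k, (exclusiveRegion r τ k).Nonempty := fun k ↦
      ⟨a k, ha.corner_mem_exclusiveRegion hx hxa k⟩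
    simp only [region_nonempty, and_true]
    rw [hdom.card_disjoint_exclusiveRegion hr ⟨x, hx⟩ hcard]
    decide
  · rintro rfl
    rw [card_eq_one.2 ⟨i, ?_⟩]
    · exact odd_one
    ext k
    rw [mem_filter, mem_singleton, ha.disjoint_and_nonempty_facet_iff hr hca.injective]
    exact and_iff_right (mem_univ k)

open Classical in
theorem IsRoom.even_card_isDoor (hσ : IsRoom r σ) (hne : σ.image c ≠ univ) (i : I) :
    Even #{x ∈ σ | IsDoor r c i (σ.erase x)} := by
  obtain ⟨hdom, hcard⟩ := hσ
  have isDoor_iff : ∀ x ∈ σ, IsDoor r c i (σ.erase x) ↔ (σ.erase x).image c = univ.erase i := by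
    intro x hx
    rw [IsDoor, card_erase_add_one hx]
    exact ⟨fun h ↦ h.2.2, fun h ↦ ⟨hdom.mono (erase_subset x σ), hcard, h⟩⟩
  rw [filter_congr isDoor_iff]
  exact even_card_filter_image_erase_eq hcard hne i

end Labelling

theorem exists_isDominant_forall_exists_label [Finite I] [Nonempty I] [Finite X] {a : I → X}
    {c : X → I} (hr : ∀ i, Injective (r i))
    (ha : IsCornerSystem r a) (hca : LeftInverse c a) :
    ∃ σ, IsDominant r σ ∧ ∀ i, ∃ x ∈ σ, c x = i := by
  classical
  have := Fintype.ofFinite I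
  have := Fintype.ofFinite X
  obtain ⟨i⟩ := ‹Nonempty I›
  have odd_incidences : Odd (∑ τ with IsDoor r c i τ, #{w | w ∉ τ ∧ IsRoom r (insert w τ)}) := by
    rw [odd_sum_iff_odd_card_odd, filter_filter, card_eq_one.2 ⟨(univ.erase i).image a, ?_⟩]
    · exact odd_one
    ext τ
    simp only [mem_filter, mem_univ, true_and, mem_singleton]
    refine ⟨fun ⟨hτ, hodd⟩ ↦ (hτ.odd_card_isRoom_iff hr ha hca).1 hodd, ?_⟩
    rintro rfl
    have hdoor := isDoor_facet ha hca i
    exact ⟨hdoor, (hdoor.odd_card_isRoom_iff hr ha hca).2 rfl⟩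
  rw [sum_card_insert_eq_sum_card_erase] at odd_incidences
  by_contra! hnot
  refine Nat.not_even_iff_odd.2 odd_incidences (even_sum _ fun σ hσ ↦ ?_)
  have hroom : IsRoom r σ := (mem_filter.1 hσ).2
  obtain ⟨l, hl⟩ := hnot σ hroom.1
  refine hroom.even_card_isDoor (fun himage ↦ ?_) i
  obtain ⟨x, hx, hxl⟩ := mem_image.1 (himage.ge (mem_univ l))
  exact hl x hx hxl

end Scarf

section AddCorners

variable {I T α : Type*}

/-- The orderings that adjoin a corner for every index to points `T` ordered by `f i`. The `i`-th
ordering puts the corner of `i` at the bottom, then the points of `T`, then the other corners; the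
second component of the lexicographic product breaks ties of `f i`. -/
def cornerRank [DecidableEq I] (f : I → T → α) (i : I) : T ⊕ I → WithBot ((α ×ₗ T) ⊕ₗ I)
  | .inl t => ((Sum.inlₗ (toLex (f i t, t)) : (α ×ₗ T) ⊕ₗ I) : WithBot _)
  | .inr j => if j = i then ⊥ else ((Sum.inrₗ j : (α ×ₗ T) ⊕ₗ I) : WithBot _)

theorem cornerRank_injective [DecidableEq I] (f : I → T → α) (i : I) :
    Injective (cornerRank f i) := by
  rintro (t | j) (t' | j') h <;> simp only [cornerRank] at h <;> (try split_ifs at h) <;>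
    simp_all

variable [LinearOrder I] [LinearOrder T] [LinearOrder α]

theorem isCornerSystem_cornerRank (f : I → T → α) :
    IsCornerSystem (cornerRank f) Sum.inr where
  corner_le i x := by simp [cornerRank]
  lt_corner i j x hji hx := by
    obtain t | k := x
    · simp [cornerRank, hji]
    · exact absurd ⟨k, rfl⟩ hx

theorem le_of_cornerRank_inl_le {f : I → T → α} {i : I} {s t : T}
    (h : cornerRank f i (.inl s) ≤ cornerRank f i (.inl t)) : f i s ≤ f i t := by
  have h' : toLex (f i s, s) ≤ toLex (f i t, t) := by simpa [cornerRank] using h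
  exact Prod.Lex.monotone_fst _ _ h'

end AddCorners

theorem exists_labelled_dominating_pair {I T α : Type*} [Finite I] [Nonempty I] [Finite T]
    [LinearOrder α] (f : I → T → α) (c : T → I) :
    ∃ (C : Finset I) (σ : Finset T), (∀ i ∈ C, ∃ x ∈ σ, c x = i) ∧
      ∀ y, ∃ i ∈ C, IsMinOn (f i) σ y := by
  classical
  have := Fintype.ofFinite I
  have := Fintype.ofFinite T
  let : LinearOrder I := LinearOrder.lift' _ (Fintype.equivFin I).injective
  let : LinearOrder T := LinearOrder.lift' _ (Fintype.equivFin T).injective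
  obtain ⟨σ, hdom, hlabel⟩ := exists_isDominant_forall_exists_label (cornerRank_injective f)
    (isCornerSystem_cornerRank f) (c := Sum.elim c id) fun _ ↦ rfl
  refine ⟨univ.filter (Sum.inr · ∉ σ), univ.filter (Sum.inl · ∈ σ), fun i hi ↦ ?_, fun y ↦ ?_⟩
  · obtain ⟨t | j, hx, rfl⟩ := hlabel i
    · exact ⟨t, by simpa using hx, rfl⟩
    · exact absurd hx (mem_filter.1 hi).2
  · obtain ⟨i, hi⟩ := hdom (.inl y)
    refine ⟨i, mem_filter.2 ⟨mem_univ i, fun hmem ↦ ?_⟩, fun x hx ↦ ?_⟩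
    · simpa [cornerRank] using hi hmem
    · exact le_of_cornerRank_inl_le (hi (mem_filter.1 hx).2)

section Brouwer

open Filter Topology

variable {K T : Type*} [Fintype K] {v : T → K → ℝ} {ε : ℝ}

theorem one_le_sum_add_of_net [Nonempty K] {μ : K → ℝ}
    (hnet : ∀ z ∈ stdSimplex ℝ K, ∃ t, dist z (v t) < ε) (hμ : ∀ k, 0 ≤ μ k)
    (hvμ : ∀ t, ∃ k, v t k ≤ μ k) : 1 ≤ ∑ k, μ k + Fintype.card K * ε := by
  by_contra! hlt
  have hcard : (0 : ℝ) < Fintype.card K := Nat.cast_pos.2 Fintype.card_pos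
  obtain ⟨d, hd⟩ : ∃ d, Fintype.card K * d = 1 - ∑ k, μ k := ⟨_, mul_div_cancel₀ _ hcard.ne'⟩
  -- `μ + d` would be a point of the simplex exceeding `μ` by more than `ε` in every coordinate.
  have hεd : ε < d := lt_of_mul_lt_mul_left (by linarith) hcard.le
  have hε : 0 < ε := by
    classical
    obtain ⟨t, ht⟩ := hnet _ (single_mem_stdSimplex ℝ (Classical.arbitrary K))
    exact dist_nonneg.trans_lt ht
  have hz : (fun k ↦ μ k + d) ∈ stdSimplex ℝ K := by
    refine ⟨fun k ↦ add_nonneg (hμ k) (hε.trans hεd).le, ?_⟩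
    rw [sum_add_distrib, sum_const, card_univ, nsmul_eq_mul, hd, add_sub_cancel]
  obtain ⟨t, ht⟩ := hnet _ hz
  obtain ⟨k, hk⟩ := hvμ t
  have hdist : μ k + d - v t k < ε := (le_abs_self _).trans_lt ((dist_le_pi_dist _ _ k).trans_lt ht)
  linarith

theorem exists_lowerBound_of_net [Nonempty K] {C : Finset K} {σ : Finset T}
    (hnet : ∀ z ∈ stdSimplex ℝ K, ∃ t, dist z (v t) < ε) (hv : ∀ t, v t ∈ stdSimplex ℝ K)
    (hσ : σ.Nonempty) (hmin : ∀ t, ∃ k ∈ C, IsMinOn (fun x ↦ v x k) σ t) :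
    ∃ μ : K → ℝ, (∀ k ∉ C, μ k = 0) ∧
      ∀ x ∈ σ, ∀ k, μ k ≤ v x k ∧ v x k ≤ μ k + Fintype.card K * ε := by
  classical
  let μ k := if k ∈ C then σ.inf' hσ fun x ↦ v x k else 0
  have μ_of_mem {k} (hk : k ∈ C) : μ k = σ.inf' hσ fun x ↦ v x k := if_pos hk
  have μ_of_notMem {k} (hk : k ∉ C) : μ k = 0 := if_neg hk
  have μ_nonneg (k) : 0 ≤ μ k := by
    by_cases hk : k ∈ C
    · exact μ_of_mem hk ▸ le_inf' _ _ fun x _ ↦ (hv x).1 k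
    · exact (μ_of_notMem hk).ge
  have μ_le {x} (hx : x ∈ σ) (k) : μ k ≤ v x k := by
    by_cases hk : k ∈ C
    · exact μ_of_mem hk ▸ inf'_le _ hx
    · exact μ_of_notMem hk ▸ (hv x).1 k
  have exists_le_μ (t) : ∃ k, v t k ≤ μ k := by
    obtain ⟨k, hk, htk⟩ := hmin t
    exact ⟨k, μ_of_mem hk ▸ le_inf' _ _ fun x hx ↦ htk hx⟩
  refine ⟨μ, fun k ↦ μ_of_notMem, fun x hx k ↦ ⟨μ_le hx k, ?_⟩⟩
  have hgap : v x k - μ k ≤ ∑ k, (v x k - μ k) :=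
    single_le_sum (fun k _ ↦ sub_nonneg.2 (μ_le hx k)) (mem_univ k)
  rw [sum_sub_distrib, (hv x).2] at hgap
  linarith [one_le_sum_add_of_net hnet μ_nonneg exists_le_μ]

theorem exists_forall_exists_dist_le_and_label_or_le [Nonempty K] (c : (K → ℝ) → K) {δ : ℝ}
    (hδ : 0 < δ) :
    ∃ p ∈ stdSimplex ℝ K, ∀ k, ∃ q ∈ stdSimplex ℝ K, dist q p ≤ δ ∧ (c q = k ∨ q k ≤ δ) := by
  classical
  have hcard : (0 : ℝ) < Fintype.card K := Nat.cast_pos.2 Fintype.card_pos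
  obtain ⟨T, hT, hTfin, hTcover⟩ :=
    (isCompact_stdSimplex ℝ K).finite_cover_balls (div_pos hδ hcard)
  have hnet : ∀ z ∈ stdSimplex ℝ K, ∃ t : T, dist z t < δ / Fintype.card K := fun z hz ↦ by
    simpa using hTcover hz
  have := hTfin.to_subtype
  obtain ⟨C, σ, hlabel, hmin⟩ :=
    exists_labelled_dominating_pair (fun k (x : T) ↦ (x : K → ℝ) k) fun x ↦ c x
  obtain ⟨p, hp⟩ : σ.Nonempty := by
    obtain ⟨t, -⟩ := hnet _ (single_mem_stdSimplex ℝ (Classical.arbitrary K))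
    obtain ⟨k, hk, -⟩ := hmin t
    obtain ⟨x, hx, -⟩ := hlabel k hk
    exact ⟨x, hx⟩
  obtain ⟨μ, μ_eq_zero, hμ⟩ := exists_lowerBound_of_net hnet (fun t ↦ hT t.2) ⟨p, hp⟩ hmin
  rw [mul_div_cancel₀ _ hcard.ne'] at hμ
  have dist_le : ∀ x ∈ σ, dist (x : K → ℝ) p ≤ δ := fun x hx ↦
    (dist_pi_le_iff hδ.le).2 fun k ↦ abs_sub_le_iff.2
      ⟨by linarith [hμ x hx k, hμ p hp k], by linarith [hμ x hx k, hμ p hp k]⟩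
  refine ⟨p, hT p.2, fun k ↦ ?_⟩
  by_cases hk : k ∈ C
  · obtain ⟨x, hx, hxk⟩ := hlabel k hk
    exact ⟨x, hT x.2, dist_le x hx, .inl hxk⟩
  · refine ⟨p, hT p.2, dist_le p hp, .inr ?_⟩
    simpa [μ_eq_zero k hk] using (hμ p hp k).2

theorem exists_isFixedPt_of_continuousOn_stdSimplex [Nonempty K] {G : (K → ℝ) → K → ℝ}
    (hG : ContinuousOn G (stdSimplex ℝ K))
    (hmaps : Set.MapsTo G (stdSimplex ℝ K) (stdSimplex ℝ K)) :
    ∃ p ∈ stdSimplex ℝ K, IsFixedPt G p := by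
  have exists_label : ∀ q, ∃ k, q ∈ stdSimplex ℝ K → q k ≤ G q k := fun q ↦ by
    by_cases hq : q ∈ stdSimplex ℝ K
    · obtain ⟨k, -, hk⟩ := exists_le_of_sum_le univ_nonempty (hq.2.trans (hmaps hq).2.symm).le
      exact ⟨k, fun _ ↦ hk⟩
    · exact ⟨Classical.arbitrary K, fun h ↦ absurd h hq⟩
  choose c hc using exists_label
  let δ (n : ℕ) : ℝ := 1 / (n + 1)
  have tendsto_δ : Tendsto δ atTop (𝓝 0) := tendsto_one_div_add_atTop_nhds_zero_nat
  have approx (n : ℕ) : ∃ p ∈ stdSimplex ℝ K, ∀ k, ∃ q ∈ stdSimplex ℝ K,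
      dist q p ≤ δ n ∧ q k ≤ G q k + δ n := by
    have δ_pos : 0 < δ n := Nat.one_div_pos_of_nat
    obtain ⟨p, hp, h⟩ := exists_forall_exists_dist_le_and_label_or_le c δ_pos
    refine ⟨p, hp, fun k ↦ ?_⟩
    obtain ⟨q, hq, hdist, rfl | hle⟩ := h k
    · exact ⟨q, hq, hdist, (hc q hq).trans (le_add_of_nonneg_right δ_pos.le)⟩
    · exact ⟨q, hq, hdist, hle.trans (le_add_of_nonneg_left ((hmaps hq).1 k))⟩
  choose p hp q hq hdist hle using approx
  obtain ⟨p₀, hp₀, φ, hφ, hlim⟩ := (isCompact_stdSimplex ℝ K).tendsto_subseq hp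
  have tendsto_δφ : Tendsto (δ ∘ φ) atTop (𝓝 0) := tendsto_δ.comp hφ.tendsto_atTop
  have tendsto_q (k : K) : Tendsto (fun n ↦ q (φ n) k) atTop (𝓝[stdSimplex ℝ K] p₀) := by
    refine tendsto_nhdsWithin_iff.2 ⟨hlim.congr_dist ?_, .of_forall fun n ↦ hq _ k⟩
    exact squeeze_zero (fun _ ↦ dist_nonneg) (fun n ↦ dist_comm (p (φ n)) _ ▸ hdist _ k) tendsto_δφ
  have le_G : ∀ k ∈ univ, p₀ k ≤ G p₀ k := fun k _ ↦ by
    have hq_lim := tendsto_pi_nhds.1 (tendsto_nhdsWithin_iff.1 (tendsto_q k)).1 k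
    have hG_lim := tendsto_pi_nhds.1 ((hG p₀ hp₀).tendsto.comp (tendsto_q k)) k
    simpa using le_of_tendsto_of_tendsto' hq_lim (hG_lim.add tendsto_δφ) fun n ↦ hle (φ n) k
  have hsum : ∑ k, p₀ k = ∑ k, G p₀ k := hp₀.2.trans (hmaps hp₀).2.symm
  exact ⟨p₀, hp₀, funext fun k ↦ ((sum_eq_sum_iff_of_le le_G).1 hsum k (mem_univ k)).symm⟩

end Brouwer

section Profiles

variable {I : Type*} {S : I → Type*} [Fintype I]

/-- The joint distribution on pure profiles when the players randomize independently. -/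
def productDistribution (σ : ∀ i, S i → ℝ) (s : ∀ i, S i) : ℝ :=
  ∏ i, σ i (s i)

theorem continuous_productDistribution :
    Continuous (productDistribution : (∀ i, S i → ℝ) → (∀ i, S i) → ℝ) := by
  unfold productDistribution
  fun_prop

variable [DecidableEq I]

theorem productDistribution_update (σ : ∀ i, S i → ℝ) (i : I) (τ : S i → ℝ) (s : ∀ i, S i) :
    productDistribution (update σ i τ) s = τ (s i) * ∏ j ∈ univ \ {i}, σ j (s j) := by
  rw [productDistribution, ← prod_update_of_mem (mem_univ i)]
  exact prod_congr rfl fun j _ ↦ apply_update (fun j (f : S j → ℝ) ↦ f (s j)) σ i τ j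

variable [∀ i, Fintype (S i)]

theorem productDistribution_mem_stdSimplex {σ : ∀ i, S i → ℝ}
    (hσ : ∀ i, σ i ∈ stdSimplex ℝ (S i)) :
    productDistribution σ ∈ stdSimplex ℝ (∀ i, S i) := by
  refine ⟨fun s ↦ prod_nonneg fun i _ ↦ (hσ i).1 (s i), ?_⟩
  simp only [productDistribution]
  rw [← Fintype.piFinset_univ, ← prod_univ_sum]
  exact prod_eq_one fun i _ ↦ (hσ i).2

theorem sum_productDistribution_of_eval_eq [∀ i, DecidableEq (S i)] {σ : ∀ i, S i → ℝ}
    (hσ : ∀ i, ∑ a, σ i a = 1) (i : I) (a : S i) :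
    ∑ s with s i = a, productDistribution σ s = σ i a := by
  have filter_eq : ({s | s i = a} : Finset (∀ i, S i)) =
      Fintype.piFinset (update (fun _ ↦ univ) i {a}) := by
    rw [Fintype.piFinset_update_singleton_eq_filter_piFinset_eq (fun _ ↦ univ) i (mem_univ a),
      Fintype.piFinset_univ]
  simp only [productDistribution]
  rw [filter_eq, ← prod_univ_sum, prod_eq_single i]
  · rw [update_self, sum_singleton]
  · intro j _ hji
    rw [update_of_ne hji, hσ j]
  · exact fun h ↦ absurd (mem_univ i) h

end Profiles

theorem exists_isFixedPt_of_continuousOn_pi_stdSimplex {I : Type*} {S : I → Type*} [Finite I]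
    [∀ i, Fintype (S i)] [∀ i, Nonempty (S i)]
    {G : (∀ i, S i → ℝ) → ∀ i, S i → ℝ}
    (hG : ContinuousOn G (Set.univ.pi fun i ↦ stdSimplex ℝ (S i)))
    (hmaps : Set.MapsTo G (Set.univ.pi fun i ↦ stdSimplex ℝ (S i))
      (Set.univ.pi fun i ↦ stdSimplex ℝ (S i))) :
    ∃ σ ∈ Set.univ.pi fun i ↦ stdSimplex ℝ (S i), IsFixedPt G σ := by
  classical
  have := Fintype.ofFinite I
  let marginals (p : (∀ i, S i) → ℝ) (i : I) : S i → ℝ := FunOnFinite.linearMap ℝ ℝ (eval i) p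
  have marginals_continuous : Continuous marginals :=
    continuous_pi fun i ↦ LinearMap.continuous_of_finiteDimensional _
  have marginals_mem : Set.MapsTo marginals (stdSimplex ℝ (∀ i, S i))
      (Set.univ.pi fun i ↦ stdSimplex ℝ (S i)) := fun p hp i _ ↦
    stdSimplex.image_linearMap _ (Set.mem_image_of_mem _ hp)
  have marginals_productDistribution : Set.LeftInvOn marginals productDistribution
      (Set.univ.pi fun i ↦ stdSimplex ℝ (S i)) := fun σ hσ ↦ by
    ext i a
    exact (FunOnFinite.linearMap_apply_apply ℝ ℝ (eval i) _ a).trans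
      (sum_productDistribution_of_eval_eq (fun j ↦ (hσ j trivial).2) i a)
  obtain ⟨p, hp, hfix⟩ := exists_isFixedPt_of_continuousOn_stdSimplex
    (G := productDistribution ∘ G ∘ marginals)
    (continuous_productDistribution.comp_continuousOn
      (hG.comp marginals_continuous.continuousOn marginals_mem))
    fun p hp ↦ productDistribution_mem_stdSimplex fun i ↦ hmaps (marginals_mem hp) i trivial
  refine ⟨marginals p, marginals_mem hp, ?_⟩
  rw [IsFixedPt, ← marginals_productDistribution (hmaps (marginals_mem hp))]
  exact congrArg marginals hfix

section NashMap

variable {K : Type*} [Fintype K] {p v : K → ℝ}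

/-- One player's part of Nash's map: the mixed strategy `p` is shifted towards the pure strategies
whose gain `v k` is positive, and renormalized. -/
noncomputable def nashAdjust (p v : K → ℝ) (k : K) : ℝ :=
  (p k + (v k)⁺) / (1 + ∑ l, (v l)⁺)

theorem one_add_sum_posPart_pos (v : K → ℝ) : 0 < 1 + ∑ k, (v k)⁺ :=
  add_pos_of_pos_of_nonneg one_pos (sum_nonneg fun k _ ↦ posPart_nonneg (v k))

theorem nashAdjust_mem_stdSimplex (hp : p ∈ stdSimplex ℝ K) (v : K → ℝ) :
    nashAdjust p v ∈ stdSimplex ℝ K := by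
  refine ⟨fun k ↦ div_nonneg (add_nonneg (hp.1 k) (posPart_nonneg _))
    (one_add_sum_posPart_pos v).le, ?_⟩
  simp only [nashAdjust]
  rw [← sum_div, sum_add_distrib, hp.2, div_self (one_add_sum_posPart_pos v).ne']

theorem continuous_uncurry_nashAdjust :
    Continuous (uncurry nashAdjust : (K → ℝ) × (K → ℝ) → K → ℝ) := by
  refine continuous_pi fun k ↦ Continuous.div ?_ ?_ fun x ↦ (one_add_sum_posPart_pos _).ne'
  all_goals simp only [posPart_def]; fun_prop

theorem nonpos_of_nashAdjust_eq_self (hv : ∑ k, p k * v k ≤ 0) (hfix : nashAdjust p v = p)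
    (k : K) : v k ≤ 0 := by
  have posPart_eq (l) : (v l)⁺ = p l * ∑ m, (v m)⁺ := by
    have := congrFun hfix l
    rw [nashAdjust, div_eq_iff (one_add_sum_posPart_pos v).ne'] at this
    linarith
  have sum_sq_nonpos : ∑ l, (v l)⁺ * (v l)⁺ ≤ 0 := by
    calc ∑ l, (v l)⁺ * (v l)⁺ = ∑ l, (v l)⁺ * v l :=
          sum_congr rfl fun l _ ↦ by
            obtain h | h := le_total 0 (v l)
            · rw [posPart_of_nonneg h]
            · rw [posPart_of_nonpos h, zero_mul, zero_mul]
      _ = (∑ m, (v m)⁺) * ∑ l, p l * v l := by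
          rw [mul_sum]
          exact sum_congr rfl fun l _ ↦ by rw [posPart_eq l]; ring
      _ ≤ 0 := mul_nonpos_of_nonneg_of_nonpos (sum_nonneg fun m _ ↦ posPart_nonneg _) hv
  have hsq : (v k)⁺ * (v k)⁺ ≤ ∑ l, (v l)⁺ * (v l)⁺ :=
    single_le_sum (f := fun l ↦ (v l)⁺ * (v l)⁺) (fun l _ ↦ mul_self_nonneg _) (mem_univ k)
  exact posPart_eq_zero.1 <| mul_self_eq_zero.1 <|
    (hsq.trans sum_sq_nonpos).antisymm (mul_self_nonneg _)

end NashMap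

section Payoff

variable {I : Type*} {S : I → Type*} [Fintype I] [∀ i, Fintype (S i)]

/-- The expected value of the payoff `u` of a single player under the mixed profile `σ`. -/
def expectedPayoff [DecidableEq I] (u : (∀ i, S i) → ℝ) (σ : ∀ i, S i → ℝ) : ℝ :=
  ∑ s, productDistribution σ s * u s

variable [DecidableEq I]

theorem continuous_expectedPayoff (u : (∀ i, S i) → ℝ) : Continuous (expectedPayoff u) := by
  have := continuous_pi_iff.1 (continuous_productDistribution (S := S))
  unfold expectedPayoff
  fun_prop

variable [∀ i, DecidableEq (S i)]

theorem expectedPayoff_update (u : (∀ i, S i) → ℝ) (σ : ∀ i, S i → ℝ) (i : I) (τ : S i → ℝ) :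
    expectedPayoff u (update σ i τ) =
      ∑ a, τ a * expectedPayoff u (update σ i (Pi.single a 1)) := by
  simp only [expectedPayoff, productDistribution_update, mul_sum]
  rw [sum_comm]
  refine sum_congr rfl fun s _ ↦ ?_
  simp only [← mul_assoc, ← sum_mul, Pi.single_apply, mul_ite, mul_one, mul_zero, sum_ite_eq,
    mem_univ, if_true]

/-- What player `i` gains by deviating from the mixed profile `σ` to the pure strategy `a`, encoded
as the point mass `Pi.single a 1`. -/
def deviationGain (u : I → (∀ i, S i) → ℝ) (σ : ∀ i, S i → ℝ) (i : I) (a : S i) : ℝ :=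
  expectedPayoff (u i) (update σ i (Pi.single a 1)) - expectedPayoff (u i) σ

theorem continuous_deviationGain (u : I → (∀ i, S i) → ℝ) (i : I) :
    Continuous fun σ ↦ deviationGain u σ i := by
  have := continuous_expectedPayoff (u i)
  unfold deviationGain
  fun_prop

theorem sum_mul_deviationGain (u : I → (∀ i, S i) → ℝ) (σ : ∀ i, S i → ℝ) {i : I} {τ : S i → ℝ}
    (hτ : ∑ a, τ a = 1) :
    ∑ a, τ a * deviationGain u σ i a =
      expectedPayoff (u i) (update σ i τ) - expectedPayoff (u i) σ := by
  simp only [deviationGain, mul_sub]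
  rw [sum_sub_distrib, ← expectedPayoff_update, ← sum_mul, hτ, one_mul]

theorem exists_forall_deviationGain_nonpos [∀ i, Nonempty (S i)] (u : I → (∀ i, S i) → ℝ) :
    ∃ σ : ∀ i, S i → ℝ, (∀ i, σ i ∈ stdSimplex ℝ (S i)) ∧ ∀ i a, deviationGain u σ i a ≤ 0 := by
  obtain ⟨σ, hσ, hfix⟩ := exists_isFixedPt_of_continuousOn_pi_stdSimplex
    (G := fun σ i ↦ nashAdjust (σ i) (deviationGain u σ i))
    (continuous_pi fun i ↦ continuous_uncurry_nashAdjust.comp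
      ((continuous_apply i).prodMk (continuous_deviationGain u i))).continuousOn
    fun σ hσ i _ ↦ nashAdjust_mem_stdSimplex (hσ i trivial) _
  refine ⟨σ, fun i ↦ hσ i trivial, fun i ↦ nonpos_of_nashAdjust_eq_self ?_ (congrFun hfix i)⟩
  rw [sum_mul_deviationGain u σ (hσ i trivial).2, update_eq_self, sub_self]

end Payoff

/-- Every finite game has a Nash equilibrium in mixed strategies. -/
theorem stmt_0 (I : Type) [Fintype I] [Nonempty I] [DecidableEq I]
    (S : I → Type) [∀ i, Fintype (S i)] [∀ i, Nonempty (S i)]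
    (u : I → (∀ j, S j) → ℝ) :
    ∃ σ : ∀ i, S i → ℝ,
      (∀ i, (∀ a, 0 ≤ σ i a) ∧ ∑ a, σ i a = 1) ∧
      (∀ i (τ : S i → ℝ), (∀ a, 0 ≤ τ a) → ∑ a, τ a = 1 →
        ∑ s : ∀ j, S j, (∏ j, Function.update σ i τ j (s j)) * u i s ≤
          ∑ s : ∀ j, S j, (∏ j, σ j (s j)) * u i s) := by
  classical
  obtain ⟨σ, hσ, gain_nonpos⟩ := exists_forall_deviationGain_nonpos u
  refine ⟨σ, hσ, fun i τ hτ_nonneg hτ_sum ↦ ?_⟩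
  have payoff_sub_nonpos : expectedPayoff (u i) (update σ i τ) - expectedPayoff (u i) σ ≤ 0 := by
    rw [← sum_mul_deviationGain u σ hτ_sum]
    exact sum_nonpos fun a _ ↦ mul_nonpos_of_nonneg_of_nonpos (hτ_nonneg a) (gain_nonpos i a)
  exact sub_nonpos.1 payoff_sub_nonpos
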